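/- Let V : ℝ^d → ℝ and b : ℝ^d → ℝ^d be smooth with ⟨b(x), ∇V(x)⟩ = 0 for all x ∈ ℝ^d, let s be a saddle point of V (∇V(s) = 0, Hess V(s) invertible with exactly one negative eigenvalue), let μ < 0 be a negative eigenvalue of Hess V(s) + B(s)ᵀ and let ξ ∈ ℝ^d be a unit vector with (Hess V(s) + B(s)ᵀ)ξ = μξ. Then there exists a neighborhood O of s such that for every x ∈ O with x ≠ s and ⟨ξ, x − s⟩ = 0, one has V(x) > V(s). -/

import Mathlib

/-!
Write `H = Hess V(s)` and `B = B(s)`. Differentiating `⟨b, ∇V⟩ = 0` once at `s` gives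
`H b(s) = 0`, hence `b(s) = 0`; differentiating twice then shows that `H B` is antisymmetric
(`hess_jac_antisymm`).

Put `η = H⁻¹ ξ`. Pairing the eigenvector equation with `η`, the antisymmetry of `H B` kills the
term in `Bᵀ`, leaving `μ ⟨η, ξ⟩ = |ξ|² = 1`; so `⟨η, H η⟩ = 1/μ < 0`, while `ξ^⊥` is the
`H`-orthogonal complement of `η`. A nonzero `w ∈ ξ^⊥` with `⟨w, H w⟩ ≤ 0` would make `H`
nonpositive on the plane spanned by `η` and `w`; that plane contains a nonzero vector orthogonal
to the negative eigenvector of `H`, where `H` is positive. Hence `H` is positive definite on `ξ^⊥`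
(`hess_pos_on_hyperplane`).

By compactness of the unit sphere of `ξ^⊥`, the Hessian at every point near `s` is still positive
on `ξ^⊥`. So `V` is strictly convex along each short segment from `s` inside `s + ξ^⊥`, with zero
initial slope, and therefore strictly increasing (`lt_of_hess_pos_on_segment`).
-/

open Matrix

/-- Partial derivative `∂_i f` of a real-valued function on `ℝ^d`. -/
noncomputable def pdR {d : ℕ} (f : (Fin d → ℝ) → ℝ) (i : Fin d) : (Fin d → ℝ) → ℝ :=
  fun x => fderiv ℝ f x (Pi.single i 1)

/-- Euclidean gradient `∇V`. -/
noncomputable def gradV {d : ℕ} (V : (Fin d → ℝ) → ℝ) (x : Fin d → ℝ) : Fin d → ℝ :=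
  fun i => pdR V i x

/-- Hessian matrix `Hess V(x)`, with entries `∂_i ∂_j V(x)`. -/
noncomputable def hessM {d : ℕ} (V : (Fin d → ℝ) → ℝ) (x : Fin d → ℝ) :
    Matrix (Fin d) (Fin d) ℝ :=
  fun i j => pdR (pdR V j) i x

/-- Jacobian matrix `B(x)` of a vector field `b`, with entries `∂_j b_i(x)`. -/
noncomputable def jacM {d : ℕ} (b : (Fin d → ℝ) → Fin d → ℝ) (x : Fin d → ℝ) :
    Matrix (Fin d) (Fin d) ℝ :=
  fun i j => pdR (fun y => b y i) j x

/-! ### Calculus with partial derivatives -/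

lemma contDiff_pdR {d : ℕ} {f : (Fin d → ℝ) → ℝ} (hf : ContDiff ℝ (⊤ : ℕ∞) f) (i : Fin d) :
    ContDiff ℝ (⊤ : ℕ∞) (pdR f i) := by
  unfold pdR
  exact (hf.fderiv_right (m := ((⊤ : ℕ∞) : WithTop ℕ∞)) (by simp)).clm_apply contDiff_const

lemma diff_of_smooth {d : ℕ} {f : (Fin d → ℝ) → ℝ} (hf : ContDiff ℝ (⊤ : ℕ∞) f) :
    Differentiable ℝ f := hf.differentiable (by simp)

lemma fderiv_eq_sum_pdR {d : ℕ} (f : (Fin d → ℝ) → ℝ) (x w : Fin d → ℝ) :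
    fderiv ℝ f x w = ∑ i, w i * pdR f i x := by
  conv_lhs => rw [← Finset.univ_sum_single w]
  rw [map_sum]
  refine Finset.sum_congr rfl fun i _ => ?_
  have : (Pi.single i (w i) : Fin d → ℝ) = w i • Pi.single i 1 := by
    rw [← Pi.single_smul]; simp
  rw [this, map_smul]; rfl

/-- Product rule for a finite sum of products. -/
lemma pdR_sum_mul {d : ℕ} {f g : Fin d → (Fin d → ℝ) → ℝ}
    (hf : ∀ k, Differentiable ℝ (f k)) (hg : ∀ k, Differentiable ℝ (g k))
    (i : Fin d) (x : Fin d → ℝ) :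
    pdR (fun y => ∑ k, f k y * g k y) i x
      = ∑ k, (pdR (f k) i x * g k x + f k x * pdR (g k) i x) := by
  have h : HasFDerivAt (fun y => ∑ k, f k y * g k y)
      (∑ k, (f k x • fderiv ℝ (g k) x + g k x • fderiv ℝ (f k) x)) x :=
    HasFDerivAt.fun_sum fun k _ => ((hf k) x).hasFDerivAt.mul ((hg k) x).hasFDerivAt
  unfold pdR
  rw [h.fderiv, _root_.sum_apply]
  refine Finset.sum_congr rfl fun k _ => ?_
  simp only [_root_.add_apply, _root_.smul_apply, smul_eq_mul]
  ring

/-- At a nondegenerate critical point, orthogonality of `b` and `∇V` makes `Hess V · B`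
antisymmetric. -/
lemma hess_jac_antisymm {d : ℕ}
    (V : (Fin d → ℝ) → ℝ) (b : (Fin d → ℝ) → Fin d → ℝ)
    (hV : ContDiff ℝ (⊤ : ℕ∞) V) (hb : ContDiff ℝ (⊤ : ℕ∞) b)
    (horth : ∀ x, ∑ i, b x i * gradV V x i = 0)
    (s : Fin d → ℝ) (hcrit : gradV V s = 0) (hdet : (hessM V s).det ≠ 0) :
    (hessM V s * jacM b s)ᵀ = -(hessM V s * jacM b s) := by
  have hbk : ∀ k, ContDiff ℝ (⊤ : ℕ∞) (fun y => b y k) := fun k => contDiff_pi.mp hb k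
  have hVk := contDiff_pdR hV
  have hc : ∀ k, pdR V k s = 0 := fun k => congrFun hcrit k
  have zero_pdR : ∀ (i : Fin d) (x : Fin d → ℝ), pdR (fun _ => (0 : ℝ)) i x = 0 := by
    intro i x; simp [pdR]
  have h0 : (fun y => ∑ k, b y k * pdR V k y) = fun _ => (0 : ℝ) := funext horth
  have h1 : ∀ i x, ∑ k, (pdR (fun y => b y k) i x * pdR V k x + b x k * pdR (pdR V k) i x)
      = 0 := by
    intro i x
    rw [← pdR_sum_mul (f := fun k y => b y k) (g := fun k => pdR V k)
      (fun k => diff_of_smooth (hbk k)) (fun k => diff_of_smooth (hVk k)), h0, zero_pdR]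
  have hbs : b s = 0 := by
    refine Matrix.eq_zero_of_mulVec_eq_zero hdet ?_
    ext i
    have := h1 i s
    simp only [hc, mul_zero, zero_add] at this
    simpa [Matrix.mulVec, dotProduct, hessM, mul_comm] using this
  have hbs' : ∀ k, b s k = 0 := fun k => congrFun hbs k
  ext i j
  have h2 : pdR (fun x => ∑ k, pdR (fun y => b y k) i x * pdR V k x) j s
      + pdR (fun x => ∑ k, b x k * pdR (pdR V k) i x) j s = 0 := by
    have h : (fun x => ∑ k, pdR (fun y => b y k) i x * pdR V k x)
        = fun x => -(∑ k, b x k * pdR (pdR V k) i x) := by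
      funext x
      have := h1 i x
      rw [Finset.sum_add_distrib] at this
      linarith
    rw [h]
    simp [pdR, fderiv_fun_neg]
  rw [pdR_sum_mul (f := fun k => pdR (fun y => b y k) i) (g := fun k => pdR V k)
      (fun k => diff_of_smooth (contDiff_pdR (hbk k) i)) (fun k => diff_of_smooth (hVk k)),
    pdR_sum_mul (f := fun k y => b y k) (g := fun k => pdR (pdR V k) i)
      (fun k => diff_of_smooth (hbk k))
      (fun k => diff_of_smooth (contDiff_pdR (hVk k) i))] at h2
  simp only [hc, hbs', mul_zero, zero_mul, zero_add, add_zero] at h2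
  simp only [Matrix.transpose_apply, Matrix.neg_apply, Matrix.mul_apply, hessM, jacM]
  simp only [mul_comm] at h2 ⊢
  linarith

/-! ### Linear algebra -/

/-- A real symmetric matrix without zero eigenvalue and with a single negative one is positive
definite on the orthogonal complement of the negative eigenvector. -/
lemma exists_pos_on_compl {d : ℕ} {H : Matrix (Fin d) (Fin d) ℝ} (hherm : H.IsHermitian)
    (hdet : H.det ≠ 0) (hone : ∃! i : Fin d, hherm.eigenvalues i < 0) :
    ∃ v : Fin d → ℝ, ∀ x, v ⬝ᵥ x = 0 → x ⬝ᵥ H *ᵥ x ≤ 0 → x = 0 := by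
  obtain ⟨i₀, -, huniq⟩ := hone
  have hne : ∀ i, hherm.eigenvalues i ≠ 0 := by
    intro i hi
    apply hdet
    rw [hherm.det_eq_prod_eigenvalues]
    exact Finset.prod_eq_zero (Finset.mem_univ i) (by simp [hi])
  let u := hherm.eigenvectorBasis
  refine ⟨⇑(u i₀), fun x hx hq => ?_⟩
  have hin : ∀ (i : Fin d) (y : Fin d → ℝ), inner ℝ (u i) (WithLp.toLp 2 y) = ⇑(u i) ⬝ᵥ y := by
    intro i y
    simp [PiLp.inner_apply, dotProduct, mul_comm]
  have hdecomp : ∀ y : Fin d → ℝ, x ⬝ᵥ y = ∑ i, (⇑(u i) ⬝ᵥ x) * (⇑(u i) ⬝ᵥ y) := by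
    intro y
    have h := u.sum_inner_mul_inner (WithLp.toLp 2 x) (WithLp.toLp 2 y)
    have h' : inner ℝ (WithLp.toLp 2 x) (WithLp.toLp 2 y) = x ⬝ᵥ y := by
      simp [PiLp.inner_apply, dotProduct, mul_comm]
    rw [← h', ← h]
    refine Finset.sum_congr rfl fun i _ => ?_
    rw [real_inner_comm, hin, hin]
  have heig : ∀ i, ⇑(u i) ⬝ᵥ H *ᵥ x = hherm.eigenvalues i * (⇑(u i) ⬝ᵥ x) := by
    intro i
    have hT : Hᵀ = H := by rw [← Matrix.conjTranspose_eq_transpose_of_trivial]; exact hherm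
    have := hherm.mulVec_eigenvectorBasis i
    rw [Matrix.dotProduct_mulVec, ← Matrix.mulVec_transpose, hT, this, smul_dotProduct,
      smul_eq_mul]
  rw [hdecomp] at hq
  have hnn : ∀ i ∈ Finset.univ, 0 ≤ (⇑(u i) ⬝ᵥ x) * (⇑(u i) ⬝ᵥ H *ᵥ x) := by
    intro i _
    by_cases hi : i = i₀
    · rw [hi, hx, zero_mul]
    · have : 0 ≤ hherm.eigenvalues i := not_lt.mp fun h => hi (huniq i h)
      rw [heig]
      nlinarith [mul_nonneg this (sq_nonneg (⇑(u i) ⬝ᵥ x))]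
  have hz := (Finset.sum_eq_zero_iff_of_nonneg hnn).mp
    (le_antisymm hq (Finset.sum_nonneg hnn))
  have hci : ∀ i, ⇑(u i) ⬝ᵥ x = 0 := by
    intro i
    have h := hz i (Finset.mem_univ i)
    rw [heig] at h
    have h3 : hherm.eigenvalues i * (⇑(u i) ⬝ᵥ x) ^ 2 = 0 := by linarith [h]
    simpa [hne i] using h3
  have hxx : x ⬝ᵥ x = 0 := by rw [hdecomp]; simp [hci]
  exact dotProduct_self_eq_zero.mp hxx

/-- The eigenvector equation for `H + Bᵀ` with a negative eigenvalue forces `H` to be positive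
definite on `ξ^⊥`. -/
lemma hess_pos_on_hyperplane {d : ℕ} {H B : Matrix (Fin d) (Fin d) ℝ} (hherm : H.IsHermitian)
    (hdet : H.det ≠ 0) (hone : ∃! i : Fin d, hherm.eigenvalues i < 0)
    (hanti : (H * B)ᵀ = -(H * B))
    {μ : ℝ} (hμ : μ < 0) {ξ : Fin d → ℝ} (hξunit : ξ ⬝ᵥ ξ = 1)
    (hξ : (H + Bᵀ) *ᵥ ξ = μ • ξ) {w : Fin d → ℝ} (hw : w ≠ 0) (hξw : ξ ⬝ᵥ w = 0) :
    0 < w ⬝ᵥ H *ᵥ w := by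
  have hT : Hᵀ = H := by rw [← Matrix.conjTranspose_eq_transpose_of_trivial]; exact hherm
  have hsymm : ∀ x y : Fin d → ℝ, x ⬝ᵥ H *ᵥ y = (H *ᵥ x) ⬝ᵥ y := by
    intro x y
    rw [Matrix.dotProduct_mulVec, ← Matrix.mulVec_transpose, hT]
  obtain ⟨η, hη⟩ : ∃ η, H *ᵥ η = ξ :=
    ⟨H⁻¹ *ᵥ ξ, by rw [Matrix.mulVec_mulVec, Matrix.mul_nonsing_inv _ (isUnit_iff_ne_zero.mpr hdet),
      Matrix.one_mulVec]⟩
  have hB : η ⬝ᵥ Bᵀ *ᵥ ξ = 0 := by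
    have h1 : η ⬝ᵥ Bᵀ *ᵥ ξ = η ⬝ᵥ (H * B)ᵀ *ᵥ η := by
      rw [Matrix.transpose_mul, hT, ← Matrix.mulVec_mulVec, hη]
    have h2 : η ⬝ᵥ (H * B)ᵀ *ᵥ η = η ⬝ᵥ (H * B) *ᵥ η := by
      rw [Matrix.mulVec_transpose, dotProduct_comm, ← Matrix.dotProduct_mulVec]
    have h3 : η ⬝ᵥ (H * B)ᵀ *ᵥ η = -(η ⬝ᵥ (H * B) *ᵥ η) := by
      rw [hanti, Matrix.neg_mulVec, dotProduct_neg]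
    linarith
  have hμη : μ * (η ⬝ᵥ ξ) = 1 := by
    have h := congrArg (fun z => η ⬝ᵥ z) hξ
    simp only [Matrix.add_mulVec, dotProduct_add, dotProduct_smul, smul_eq_mul] at h
    rw [hB, hsymm, hη, hξunit] at h
    linarith
  have hneg : η ⬝ᵥ ξ < 0 := by nlinarith
  by_contra! hcon
  obtain ⟨v, hv⟩ := exists_pos_on_compl hherm hdet hone
  have hwη : w ⬝ᵥ ξ = 0 := by rw [dotProduct_comm]; exact hξw
  -- the combination of `η` and `w` that is orthogonal to `v`
  have hcomb := hv ((v ⬝ᵥ w) • η - (v ⬝ᵥ η) • w)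
    (by simp only [dotProduct_sub, dotProduct_smul, smul_eq_mul]; ring)
    (by
      have hηw : η ⬝ᵥ H *ᵥ w = 0 := by rw [hsymm, hη, hξw]
      simp only [Matrix.mulVec_sub, Matrix.mulVec_smul, dotProduct_sub, sub_dotProduct,
        dotProduct_smul, smul_dotProduct, smul_eq_mul, hη, hηw, hwη]
      nlinarith [mul_nonneg (sq_nonneg (v ⬝ᵥ w)) (neg_nonneg.mpr hneg.le),
        mul_nonneg (sq_nonneg (v ⬝ᵥ η)) (neg_nonneg.mpr hcon)])
  have hvw : v ⬝ᵥ w = 0 := by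
    have h := congrArg (fun z => z ⬝ᵥ ξ) hcomb
    simp only [sub_dotProduct, smul_dotProduct, smul_eq_mul, hwη, zero_dotProduct, mul_zero,
      sub_zero] at h
    exact (mul_eq_zero.mp h).resolve_right hneg.ne
  exact hw (hv w hvw hcon)

/-! ### From the Hessian to local values of `V` -/

lemma hasDerivAt_line {d : ℕ} {f : (Fin d → ℝ) → ℝ} (hf : ContDiff ℝ (⊤ : ℕ∞) f)
    (s w : Fin d → ℝ) (t : ℝ) :
    HasDerivAt (fun t : ℝ => f (s + t • w)) (∑ i, w i * pdR f i (s + t • w)) t := by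
  rw [← fderiv_eq_sum_pdR]
  have h : HasDerivAt (fun t : ℝ => s + t • w) w t := by
    simpa using ((hasDerivAt_id t).smul_const w).const_add s
  exact ((diff_of_smooth hf) (s + t • w)).hasFDerivAt.comp_hasDerivAt t h

/-- If `s` is critical and `Hess V` is positive in the direction `w` along the segment from `s`
to `s + w`, then `V s < V (s + w)`. -/
lemma lt_of_hess_pos_on_segment {d : ℕ} {V : (Fin d → ℝ) → ℝ} (hV : ContDiff ℝ (⊤ : ℕ∞) V)
    {s w : Fin d → ℝ} (hcrit : gradV V s = 0)
    (hpos : ∀ t ∈ Set.Icc (0 : ℝ) 1, 0 < w ⬝ᵥ hessM V (s + t • w) *ᵥ w) :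
    V s < V (s + w) := by
  have h1 := hasDerivAt_line hV s w
  have h2 : ∀ t : ℝ, HasDerivAt (fun t : ℝ => ∑ i, w i * pdR V i (s + t • w))
      (w ⬝ᵥ hessM V (s + t • w) *ᵥ w) t := by
    intro t
    have h := HasDerivAt.fun_sum (u := Finset.univ) fun i _ =>
      (hasDerivAt_line (contDiff_pdR hV i) s w t).const_mul (w i)
    refine h.congr_deriv ?_
    simp only [dotProduct, Matrix.mulVec, hessM, Finset.mul_sum]
    rw [Finset.sum_comm]
    refine Finset.sum_congr rfl fun i _ => Finset.sum_congr rfl fun j _ => by ring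
  have hmono' : StrictMonoOn (fun t : ℝ => ∑ i, w i * pdR V i (s + t • w)) (Set.Icc 0 1) :=
    strictMonoOn_of_deriv_pos (convex_Icc 0 1)
      (fun t _ => (h2 t).continuousAt.continuousWithinAt)
      (fun t ht => by rw [(h2 t).deriv]; exact hpos t (interior_subset ht))
  have hmono : StrictMonoOn (fun t : ℝ => V (s + t • w)) (Set.Icc 0 1) := by
    refine strictMonoOn_of_deriv_pos (convex_Icc 0 1)
      (fun t _ => (h1 t).continuousAt.continuousWithinAt) (fun t ht => ?_)
    rw [(h1 t).deriv]
    rw [interior_Icc] at ht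
    have h := hmono' (Set.left_mem_Icc.mpr zero_le_one) ⟨ht.1.le, ht.2.le⟩ ht.1
    have hc : ∀ k, pdR V k s = 0 := fun k => congrFun hcrit k
    simpa [hc] using h
  simpa using hmono (Set.left_mem_Icc.mpr zero_le_one) (Set.right_mem_Icc.mpr zero_le_one)
    zero_lt_one

/-- If `⟨b, ∇V⟩ ≡ 0`, `s` is a saddle point of `V`, `μ < 0` is a negative eigenvalue of
`Hess V(s) + B(s)ᵀ` with unit eigenvector `ξ`, then on a sufficiently small neighborhood
of `s` the affine hyperplane `s + ξ^⊥` meets `{V ≤ V(s)}` only at `s`: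
`V(x) > V(s)` for all `x ≠ s` in the neighborhood with `⟨ξ, x − s⟩ = 0`. -/
theorem V_pos_on_hyperplane_near_saddle
    (d : ℕ) (hd : 1 ≤ d)
    (V : (Fin d → ℝ) → ℝ) (b : (Fin d → ℝ) → Fin d → ℝ)
    (hV : ContDiff ℝ (⊤ : ℕ∞) V) (hb : ContDiff ℝ (⊤ : ℕ∞) b)
    (horth : ∀ x, ∑ i, b x i * gradV V x i = 0)
    (s : Fin d → ℝ)
    (hcrit : gradV V s = 0)
    (hherm : (hessM V s).IsHermitian)
    (hdet : (hessM V s).det ≠ 0)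
    (hone : ∃! i : Fin d, hherm.eigenvalues i < 0)
    (μ : ℝ) (hμ : μ < 0)
    (ξ : Fin d → ℝ) (hξunit : ∑ i, ξ i * ξ i = 1)
    (hξ : (hessM V s + (jacM b s)ᵀ).mulVec ξ = μ • ξ) :
    ∃ O ∈ nhds s, ∀ x ∈ O, x ≠ s → (∑ i, ξ i * (x i - s i) = 0) → V s < V x := by
  have hanti := hess_jac_antisymm V b hV hb horth s hcrit hdet
  have hpos : ∀ w : Fin d → ℝ, w ≠ 0 → ξ ⬝ᵥ w = 0 → 0 < w ⬝ᵥ hessM V s *ᵥ w :=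
    fun w hw hξw => hess_pos_on_hyperplane hherm hdet hone hanti hμ hξunit hξ hw hξw
  have hcont : Continuous fun p : (Fin d → ℝ) × (Fin d → ℝ) => p.2 ⬝ᵥ hessM V p.1 *ᵥ p.2 := by
    have hij : ∀ i j, Continuous (pdR (pdR V j) i) := fun i j =>
      (contDiff_pdR (contDiff_pdR hV j) i).continuous
    simp only [dotProduct, Matrix.mulVec, hessM]
    fun_prop
  have hK : IsCompact {v : Fin d → ℝ | ‖v‖ = 1 ∧ ξ ⬝ᵥ v = 0} := by
    have hc : Continuous fun v : Fin d → ℝ => ξ ⬝ᵥ v := by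
      simp only [dotProduct]
      fun_prop
    have h : IsClosed {v : Fin d → ℝ | ξ ⬝ᵥ v = 0} := isClosed_eq hc continuous_const
    have heq : {v : Fin d → ℝ | ‖v‖ = 1 ∧ ξ ⬝ᵥ v = 0}
        = Metric.sphere 0 1 ∩ {v | ξ ⬝ᵥ v = 0} := by
      ext v; simp
    rw [heq]
    exact (isCompact_sphere (0 : Fin d → ℝ) 1).inter_right h
  have hev : ∀ᶠ y in nhds s, ∀ v ∈ {v : Fin d → ℝ | ‖v‖ = 1 ∧ ξ ⬝ᵥ v = 0},
      0 < v ⬝ᵥ hessM V y *ᵥ v := by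
    refine hK.eventually_forall_of_forall_eventually fun v hv => ?_
    have hv0 : v ≠ 0 := by rintro rfl; simp at hv
    exact hcont.continuousAt.eventually (lt_mem_nhds (hpos v hv0 hv.2))
  obtain ⟨ε, hε, hball⟩ := Metric.eventually_nhds_iff_ball.mp hev
  refine ⟨Metric.ball s ε, Metric.ball_mem_nhds s hε, fun x hx hxs hξx => ?_⟩
  have hw : x - s ≠ 0 := sub_ne_zero.mpr hxs
  have hn : 0 < ‖x - s‖ := norm_pos_iff.mpr hw
  have hlt : ‖x - s‖ < ε := by rwa [← dist_eq_norm]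
  rw [show x = s + (x - s) by abel]
  refine lt_of_hess_pos_on_segment hV hcrit fun t ht => ?_
  have hy : s + t • (x - s) ∈ Metric.ball s ε := by
    rw [Metric.mem_ball, dist_eq_norm, add_sub_cancel_left, norm_smul, Real.norm_eq_abs,
      abs_of_nonneg ht.1]
    nlinarith [ht.2]
  have hξw : ξ ⬝ᵥ (x - s) = 0 := hξx
  -- positivity on the unit sphere of the hyperplane, rescaled by homogeneity
  have h := hball _ hy (‖x - s‖⁻¹ • (x - s))
    ⟨by rw [norm_smul, norm_inv, norm_norm, inv_mul_cancel₀ hn.ne'],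
      by rw [dotProduct_smul, hξw, smul_zero]⟩
  simp only [Matrix.mulVec_smul, dotProduct_smul, smul_dotProduct, smul_eq_mul] at h
  have hi : 0 < ‖x - s‖⁻¹ := inv_pos.mpr hn
  exact (mul_pos_iff_of_pos_left hi).mp ((mul_pos_iff_of_pos_left hi).mp h)
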